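/- arXiv:2107.03154 — 3 statements merged into one kernel-verified Lean document; each statement's English description precedes it below -/
import Mathlib

section
/- Let F be a free group, H ≤ F a subgroup, and g ∈ F. Then the homomorphism φ_g : H ∗ ⟨x⟩ → F is not injective if and only if there exists a finitely generated subgroup H' ≤ H such that the rank of the subgroup ⟨H', g⟩ generated by H' and g is at most the rank of H'. -/
open scoped Monoid.Coprod

variable {F : Type*}

/-- The canonical homomorphism `φ_g : H ∗ ⟨x⟩ → F` from the free product of `H` with an
infinite cyclic group (the free group on one generator `x`), restricting to the inclusion
`H ↪ F` and sending `x` to `g`. -/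
noncomputable def phi [Group F] (H : Subgroup F) (g : F) :
    (↥H ∗ FreeGroup Unit) →* F :=
  Monoid.Coprod.lift H.subtype (FreeGroup.lift fun _ => g)

/-- `g` depends on `H` (is algebraic over `H`) if `φ_g` is not injective. -/
def Depends [Group F] (H : Subgroup F) (g : F) : Prop :=
  ¬ Function.Injective (phi H g)

/-- `dep H`: the set of elements of `F` that depend on `H`. -/
def depSet [Group F] (H : Subgroup F) : Set F := {g | Depends H g}

/-- `Dep H`: the subgroup generated by the elements that depend on `H`. -/
noncomputable def DepSubgroup [Group F] (H : Subgroup F) : Subgroup F :=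
  Subgroup.closure (depSet H)

/-- The rank of a subgroup: the minimal cardinality of a generating set. For subgroups of
free groups this equals the cardinality of a free basis. -/
noncomputable def rk [Group F] (H : Subgroup F) : Cardinal :=
  ⨅ S : {S : Set F // Subgroup.closure S = H}, Cardinal.mk S.1

/-!
Let `K ≤ F` be finitely generated with a free basis of `n` elements. Then `φ_g` maps `K ∗ ⟨x⟩`, a
free group of rank `n + 1`, onto the free group `⟨K, g⟩`. Finitely generated free groups are
Hopfian, being residually finite, so this surjection is injective exactly when `⟨K, g⟩` has rank
`n + 1`, that is, when its rank exceeds that of `K`.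

For arbitrary `H`, every element of `H ∗ ⟨x⟩` involves only finitely many elements of `H`, so `φ_g`
is injective as soon as its restrictions to `K ∗ ⟨x⟩` are, for `K ≤ H` finitely generated. The
converse uses that `K ∗ ⟨x⟩` embeds in `H ∗ ⟨x⟩`.
-/

universe u v w

section PermutationExtension

open Equiv

theorem exists_perm_apply_eq_of_injOn {ι X : Type*} [Finite X] {u v : ι → X} {s : Set ι}
    (hu : Set.InjOn u s) (hv : Set.InjOn v s) : ∃ σ : Perm X, ∀ i ∈ s, σ (u i) = v i := by
  classical
  have := Fintype.ofFinite X
  let e : u '' s ≃ v '' s :=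
    (Equiv.Set.imageOfInjOn u s hu).symm.trans (Equiv.Set.imageOfInjOn v s hv)
  refine ⟨e.extendSubtype, fun i hi => ?_⟩
  rw [e.extendSubtype_apply_of_mem _ (Set.mem_image_of_mem u hi)]
  have hsymm : (Equiv.Set.imageOfInjOn u s hu).symm ⟨u i, Set.mem_image_of_mem u hi⟩ = ⟨i, hi⟩ :=
    (Equiv.symm_apply_eq _).mpr rfl
  exact congrArg (fun x => ((Equiv.Set.imageOfInjOn v s hv x : v '' s) : X)) hsymm

/-- `X` is the induced `B`-set `B ×_A Y`, the quotient of `B × Y` identifying `(b * f a, y)` with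
`(b, a • y)`. -/
theorem exists_monoidHom_perm_extending_smul {A : Type u} {B : Type v} {Y : Type w} [Group A]
    [Group B] [MulAction A Y] {f : A →* B} (hf : Function.Injective f) :
    ∃ (X : Type max v w) (ρ : B →* Perm X) (j : Y ↪ X), ∀ a y, ρ (f a) (j y) = j (a • y) := by
  let induced : Setoid (B × Y) :=
    { r p q := ∃ a, p.1 = q.1 * f a ∧ a • p.2 = q.2
      iseqv :=
        { refl := fun p => ⟨1, by simp⟩
          symm := fun ⟨a, h₁, h₂⟩ => ⟨a⁻¹, by simp [h₁], by simp [← h₂]⟩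
          trans := fun ⟨a, h₁, h₂⟩ ⟨a', h₁', h₂'⟩ =>
            ⟨a' * a, by simp [h₁, h₁', mul_assoc], by rw [mul_smul, h₂, h₂']⟩ } }
  let _ : MulAction B (Quotient induced) :=
    { smul b := Quotient.map (fun p => (b * p.1, p.2)) fun p q ⟨a, h₁, h₂⟩ =>
        ⟨a, by simp [h₁, mul_assoc], h₂⟩
      one_smul := by rintro ⟨b, y⟩; exact congrArg (fun c => ⟦(c, y)⟧) (one_mul b)
      mul_smul := by rintro c d ⟨b, y⟩; exact congrArg (fun c => ⟦(c, y)⟧) (mul_assoc c d b) }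
  have hj : Function.Injective fun y : Y => (⟦(1, y)⟧ : Quotient induced) := by
    intro y z h
    obtain ⟨a, ha, hay⟩ := Quotient.exact h
    have ha : a = 1 := hf (by simpa using ha.symm)
    simpa [ha] using hay
  exact ⟨Quotient induced, MulAction.toPermHom B _, ⟨fun y => ⟦(1, y)⟧, hj⟩,
    fun a y => Quotient.sound (⟨a, by simp, rfl⟩ : induced (f a * 1, y) (1, a • y))⟩

/-- Left multiplication makes `A ∗ C` an `A`-set, which extends to a `B`-set `X`. Let `C` act on `X`
by left multiplication on `A ∗ C` and trivially elsewhere: then the image of `w` moves the point `1`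
to `w`. -/
theorem coprod_map_id_injective {A B C : Type*} [Group A] [Group B] [Group C] {f : A →* B}
    (hf : Function.Injective f) :
    Function.Injective (Monoid.Coprod.map f (MonoidHom.id C)) := by
  let _ : MulAction A (A ∗ C) := .compHom _ (Monoid.Coprod.inl : A →* A ∗ C)
  obtain ⟨X, ρ, j, hρ⟩ := exists_monoidHom_perm_extending_smul (Y := A ∗ C) hf
  let act : B ∗ C →* Perm X := Monoid.Coprod.lift ρ <|
    (Perm.viaEmbeddingHom j).comp <|
      (MulAction.toPermHom (A ∗ C) (A ∗ C)).comp Monoid.Coprod.inr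
  have hact (w p : A ∗ C) : act (Monoid.Coprod.map f (MonoidHom.id C) w) (j p) = j (w * p) := by
    induction w using Monoid.Coprod.induction_on generalizing p with
    | inl a => exact hρ a p
    | inr c => simp [act, Perm.viaEmbeddingHom_apply, Perm.viaEmbedding_apply]
    | mul v w hv hw => rw [map_mul, map_mul, Perm.mul_apply, hw, hv, mul_assoc]
  refine (injective_iff_map_eq_one _).mpr fun w hw => ?_
  simpa [hw] using (hact w 1).symm

end PermutationExtension

section ResidualFiniteness

/-- The points `p` trace the word `L` under the permutations `σ`: its `k`th letter moves `p (k + 1)`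
to `p k`. The points run backwards because a product of permutations acts from its last factor. -/
def IsTrace {α X : Type*} (σ : α → Equiv.Perm X) (L : List (α × Bool))
    (p : Fin (L.length + 1) → X) : Prop :=
  ∀ k : Fin L.length, cond L[k].2 (σ L[k].1) (σ L[k].1)⁻¹ (p k.succ) = p k.castSucc

theorem lift_mk_apply_last_of_isTrace {α X : Type*} {σ : α → Equiv.Perm X} :
    ∀ {L : List (α × Bool)} {p : Fin (L.length + 1) → X}, IsTrace σ L p →
      FreeGroup.lift σ (FreeGroup.mk L) (p (Fin.last _)) = p 0
  | [], p, _ => by simp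
  | x :: L, p, hp => by
    have htail : IsTrace σ L fun k => p k.succ := fun k => hp k.succ
    have ih := lift_mk_apply_last_of_isTrace htail
    rw [FreeGroup.lift_mk] at ih ⊢
    rw [List.map_cons, List.prod_cons, Equiv.Perm.mul_apply]
    exact (congrArg _ ih).trans (hp 0)

/-- The letters involving a fixed generator prescribe a partial injection of the vertices, because
`L` has no cancelling neighbours. -/
theorem exists_isTrace_id_of_isReduced {α : Type*} {L : List (α × Bool)}
    (hL : FreeGroup.IsReduced L) :
    ∃ σ : α → Equiv.Perm (Fin (L.length + 1)), IsTrace σ L id := by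
  let endpoint (side : Bool) (k : Fin L.length) := cond (L[k].2 == side) k.succ k.castSucc
  have hadj {k l : Fin L.length} (hkl : L[k].1 = L[l].1) (h : (k : ℕ) + 1 = l) :
      L[k].2 = L[l].2 := by
    rcases l with ⟨_, hl⟩
    cases h
    exact List.isChain_iff_getElem.mp hL k hl hkl
  have hinj (side : Bool) (a : α) : Set.InjOn (endpoint side) {k | L[k].1 = a} := by
    intro k hk l hl h
    have hkl := hadj (hk.trans hl.symm)
    have hlk := hadj (hl.trans hk.symm)
    simp only [endpoint] at h
    cases h₁ : L[k].2 <;> cases h₂ : L[l].2 <;> cases side <;> simp_all [Fin.ext_iff]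
  choose σ hσ using fun a => exists_perm_apply_eq_of_injOn (hinj true a) (hinj false a)
  refine ⟨σ, fun k => ?_⟩
  have h : σ L[k].1 (endpoint true k) = endpoint false k := hσ _ k rfl
  simp only [endpoint] at h
  cases hk : L[k].2 <;> rw [hk] at h
  · exact Equiv.Perm.inv_eq_iff_eq.mpr h.symm
  · exact h

theorem residuallyFinite_freeGroup (α : Type*) : Group.ResiduallyFinite (FreeGroup α) := by
  classical
  refine Group.residuallyFinite_of_forall_exists_finite_monoidHom fun w hw => ?_
  obtain ⟨σ, hσ⟩ := exists_isTrace_id_of_isReduced (FreeGroup.isReduced_toWord (x := w))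
  refine ⟨_, _, inferInstance, FreeGroup.lift σ, fun h => hw ?_⟩
  have hlast := lift_mk_apply_last_of_isTrace hσ
  rw [FreeGroup.mk_toWord, h] at hlast
  have hlen : w.toWord.length = 0 := congrArg Fin.val hlast
  exact FreeGroup.toWord_eq_nil_iff.mp (List.length_eq_zero_iff.mp hlen)

/-- Precomposition with `f` permutes the finitely many homomorphisms to a finite quotient of `G`, so
the quotient map itself factors through `f`. -/
theorem injective_of_surjective_of_residuallyFinite {G : Type*} [Group G] [Group.FG G]
    [Group.ResiduallyFinite G] {f : G →* G} (hf : Function.Surjective f) :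
    Function.Injective f := by
  refine (injective_iff_map_eq_one f).mpr fun w hw => ?_
  refine Group.eq_one_iff_forall_finiteIndexNormalSubroup w fun N => ?_
  obtain ⟨n, ⟨P⟩⟩ := Group.fg_iff_nonempty_finite_generators.mp ‹Group.FG G›
  have : Finite (G →* G ⧸ N.toSubgroup) :=
    Finite.of_injective (fun q i => q (P.val i)) fun q q' h => P.hom_ext q q' (congrFun h)
  obtain ⟨q, hq⟩ := Finite.surjective_of_injective
    (f := fun q : G →* G ⧸ N.toSubgroup => q.comp f)
    (fun _ _ h => (MonoidHom.cancel_right hf).mp h) (QuotientGroup.mk' N.toSubgroup)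
  have hmk : QuotientGroup.mk' N.toSubgroup w = 1 := by
    rw [← hq, MonoidHom.comp_apply, hw, map_one]
  exact (QuotientGroup.eq_one_iff w).mp hmk

end ResidualFiniteness

section Basis

open Cardinal

/-- A free basis, regarded as a generating family. -/
noncomputable def basisGenerators {ι G : Type*} [Group G] (b : FreeGroupBasis ι G) :
    Group.Generators G ι :=
  .map ⟨FreeGroup.of, FreeGroup.closure_range_of ι⟩ b.repr.symm.toMonoidHom b.repr.symm.surjective

theorem lift_mk_basis_le_lift_mk_generators {ι : Type v} {κ : Type w} {G : Type*} [Group G]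
    (b : FreeGroupBasis ι G) (P : Group.Generators G κ) : lift.{w} #ι ≤ lift.{v} #κ := by
  let f : FreeGroup κ →* FreeGroup ι := b.repr.toMonoidHom.comp (FreeGroup.lift P.val)
  have hf : Function.Surjective f := b.repr.surjective.comp P.lift_val_surjective
  let fab : FreeAbelianGroup κ →+ FreeAbelianGroup ι := (Abelianization.map f).toAdditive
  have hfab : Function.Surjective fab :=
    .of_comp (g := Abelianization.of) (Quotient.mk_surjective.comp hf)
  have h := LinearMap.lift_rank_le_of_surjective fab.toIntLinearMap hfab
  rwa [(FreeAbelianGroup.basis ι).mk_eq_rank'', (FreeAbelianGroup.basis κ).mk_eq_rank'']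

/-- The basis of a free product of free groups given by bases of the two factors. -/
noncomputable def coprodBasis {ι κ G H : Type*} [Group G] [Group H] (b : FreeGroupBasis ι G)
    (c : FreeGroupBasis κ H) : FreeGroupBasis (ι ⊕ κ) (G ∗ H) :=
  .ofRepr <| MonoidHom.toMulEquiv
    (Monoid.Coprod.lift ((FreeGroup.map Sum.inl).comp b.repr.toMonoidHom)
      ((FreeGroup.map Sum.inr).comp c.repr.toMonoidHom))
    (FreeGroup.lift (Sum.elim (Monoid.Coprod.inl ∘ b) (Monoid.Coprod.inr ∘ c)))
    (Monoid.Coprod.hom_ext (b.ext_hom _ _ fun i => by simp) (c.ext_hom _ _ fun i => by simp))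
    (by ext (i | i) <;> simp)

theorem injective_of_surjective_of_mk_le {ι κ : Type u} [Finite ι] {G L : Type*} [Group G]
    [Group L] (b : FreeGroupBasis ι G) (c : FreeGroupBasis κ L) (h : #ι ≤ #κ) {f : G →* L}
    (hf : Function.Surjective f) : Function.Injective f := by
  have hle : #κ ≤ #ι := by
    simpa using lift_mk_basis_le_lift_mk_generators c ((basisGenerators b).map f hf)
  obtain ⟨e⟩ := Cardinal.eq.mp (hle.antisymm h)
  let toFree := (c.reindex e).repr
  let endo : FreeGroup ι →* FreeGroup ι :=
    (toFree.toMonoidHom.comp f).comp b.repr.symm.toMonoidHom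
  have := residuallyFinite_freeGroup ι
  have hendo : Function.Injective endo := injective_of_surjective_of_residuallyFinite <|
    (toFree.surjective.comp hf).comp b.repr.symm.surjective
  have hcomp : Function.Injective (toFree ∘ f) :=
    (Function.Injective.of_comp_iff' _ b.repr.symm.bijective).mp hendo
  exact hcomp.of_comp

end Basis

section Rank

open Cardinal

variable {G : Type u} [Group G] {H : Subgroup G}

theorem rk_le_mk_generators {κ : Type u} (P : Group.Generators H κ) : rk H ≤ #κ := by
  have hS : Subgroup.closure (Set.range (H.subtype ∘ P.val)) = H := by
    rw [Set.range_comp, ← MonoidHom.map_closure, P.closure_eq_top, ← MonoidHom.range_eq_map,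
      H.range_subtype]
  exact (ciInf_le' _ ⟨_, hS⟩).trans mk_range_le

theorem exists_generators_mk_eq_rk (H : Subgroup G) :
    ∃ S : Set G, Nonempty (Group.Generators H S) ∧ #S = rk H := by
  have : Nonempty {S : Set G // Subgroup.closure S = H} := ⟨⟨H, H.closure_eq⟩⟩
  obtain ⟨⟨S, rfl⟩, hS⟩ := ciInf_mem fun S : {S : Set G // Subgroup.closure S = H} => #S.1
  refine ⟨S, ⟨⟨fun s => ⟨s, Subgroup.subset_closure s.2⟩, ?_⟩⟩, hS⟩
  convert Subgroup.closure_closure_coe_preimage (k := S)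
  ext ⟨x, hx⟩
  simp

theorem rk_eq_mk_basis {ι : Type u} (b : FreeGroupBasis ι H) : rk H = #ι := by
  refine (rk_le_mk_generators (basisGenerators b)).antisymm ?_
  obtain ⟨S, ⟨P⟩, hS⟩ := exists_generators_mk_eq_rk H
  simpa [hS] using lift_mk_basis_le_lift_mk_generators b P

theorem rk_lt_aleph0 (hH : H.FG) : rk H < ℵ₀ := by
  obtain ⟨S, hS⟩ := hH
  exact (ciInf_le' _ ⟨(S : Set G), hS⟩).trans_lt (mk_lt_aleph0 (α := S))

end Rank

section FreeProduct

variable {G C : Type*} [Group G] [Group C]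

theorem range_coprod_map_inclusion_mono {K L H : Subgroup G} (hKL : K ≤ L) (hL : L ≤ H) :
    (Monoid.Coprod.map (Subgroup.inclusion (hKL.trans hL)) (MonoidHom.id C)).range ≤
      (Monoid.Coprod.map (Subgroup.inclusion hL) (MonoidHom.id C)).range := by
  rintro _ ⟨v, rfl⟩
  refine ⟨Monoid.Coprod.map (Subgroup.inclusion hKL) (MonoidHom.id C) v, ?_⟩
  rw [← MonoidHom.comp_apply, Monoid.Coprod.map_comp_map]
  rfl

theorem exists_fg_mem_range_coprod_map_inclusion {H : Subgroup G} (w : H ∗ C) :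
    ∃ (K : Subgroup G) (hK : K ≤ H), K.FG ∧
      w ∈ (Monoid.Coprod.map (Subgroup.inclusion hK) (MonoidHom.id C)).range := by
  induction w using Monoid.Coprod.induction_on with
  | inl h =>
    refine ⟨Subgroup.zpowers h.1, by simp, ⟨{h.1}, by simp [Subgroup.zpowers_eq_closure]⟩,
      Monoid.Coprod.inl ⟨h.1, Subgroup.mem_zpowers h.1⟩, ?_⟩
    rw [Monoid.Coprod.map_apply_inl]
    rfl
  | inr c => exact ⟨⊥, bot_le, Subgroup.FG.bot, Monoid.Coprod.inr c, by simp⟩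
  | mul x y hx hy =>
    obtain ⟨K, hK, hKfg, hx⟩ := hx
    obtain ⟨L, hL, hLfg, hy⟩ := hy
    have hKL : K ⊔ L ≤ H := sup_le hK hL
    exact ⟨K ⊔ L, hKL, hKfg.sup hLfg, mul_mem (range_coprod_map_inclusion_mono le_sup_left hKL hx)
      (range_coprod_map_inclusion_mono le_sup_right hKL hy)⟩

end FreeProduct

section Dependence

open Cardinal

variable [Group F] {K H : Subgroup F} {g : F}

theorem phi_comp_map_inclusion (hK : K ≤ H) (g : F) :
    (phi H g).comp (Monoid.Coprod.map (Subgroup.inclusion hK) (MonoidHom.id _)) = phi K g :=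
  Monoid.Coprod.hom_ext rfl rfl

theorem range_phi (H : Subgroup F) (g : F) :
    (phi H g).range = H ⊔ Subgroup.closure {g} := by
  rw [phi, Monoid.Coprod.range_lift, H.range_subtype, FreeGroup.range_lift_eq_closure,
    Set.range_const]

theorem injective_phi_iff_rk_lt [IsFreeGroup K] [IsFreeGroup (phi K g).range] (hK : K.FG) :
    Function.Injective (phi K g) ↔ rk K < rk (phi K g).range := by
  obtain ⟨ι, ⟨b⟩⟩ := IsFreeGroup.nonempty_basis (G := K)
  obtain ⟨κ, ⟨c⟩⟩ := IsFreeGroup.nonempty_basis (G := (phi K g).range)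
  have hrk : rk K = #ι := rk_eq_mk_basis b
  have hι : #ι < ℵ₀ := hrk ▸ rk_lt_aleph0 hK
  have : Finite ι := lt_aleph0_iff_finite.mp hι
  let d : FreeGroupBasis (ι ⊕ Unit) (K ∗ FreeGroup Unit) := coprodBasis b (.ofFreeGroup Unit)
  have hsum : #(ι ⊕ Unit) = rk K + 1 := by simp [hrk]
  constructor
  · intro hinj
    rw [rk_eq_mk_basis (d.map (MonoidHom.ofInjective hinj)), hsum]
    obtain ⟨n, hn⟩ := lt_aleph0.mp (rk_lt_aleph0 hK)
    rw [hn]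
    exact_mod_cast n.lt_succ_self
  · intro hlt
    have hle : #(ι ⊕ Unit) ≤ #κ := by
      rw [hsum, ← rk_eq_mk_basis c]
      exact add_one_le_of_lt hlt
    exact (phi K g).rangeRestrict_injective_iff.mp <|
      injective_of_surjective_of_mk_le d c hle (phi K g).rangeRestrict_surjective

theorem injective_phi_iff_forall_fg (H : Subgroup F) (g : F) :
    Function.Injective (phi H g) ↔ ∀ K ≤ H, K.FG → Function.Injective (phi K g) := by
  refine ⟨fun hH K hK _ => ?_, fun hfg => (injective_iff_map_eq_one _).mpr fun w hw => ?_⟩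
  · rw [← phi_comp_map_inclusion hK g]
    exact hH.comp (coprod_map_id_injective (Subgroup.inclusion_injective hK))
  · obtain ⟨K, hK, hKfg, v, rfl⟩ := exists_fg_mem_range_coprod_map_inclusion w
    rw [← MonoidHom.comp_apply, phi_comp_map_inclusion] at hw
    rw [(injective_iff_map_eq_one _).mp (hfg K hK hKfg) v hw, map_one]

/-- A group is locally free if its finitely generated subgroups are free. -/
def IsLocallyFreeGroup (G : Type*) [Group G] : Prop :=
  ∀ K : Subgroup G, K.FG → IsFreeGroup K

theorem dependence_iff_fg_subgroup_rank_general (hF : IsLocallyFreeGroup F) (H : Subgroup F)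
    (g : F) :
    ¬ Function.Injective (phi H g) ↔
      ∃ K : Subgroup F, K ≤ H ∧ K.FG ∧ rk (K ⊔ Subgroup.closure {g}) ≤ rk K := by
  have hrk (K : Subgroup F) (hK : K.FG) :
      ¬ Function.Injective (phi K g) ↔ rk (K ⊔ Subgroup.closure {g}) ≤ rk K := by
    have := hF K hK
    have := hF (phi K g).range (range_phi K g ▸ hK.sup ⟨{g}, by simp⟩)
    rw [injective_phi_iff_rk_lt hK, range_phi, not_lt]
  rw [injective_phi_iff_forall_fg]
  push Not
  exact exists_congr fun K => and_congr_right fun _ => and_congr_right (hrk K)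

end Dependence

/-- `φ_g` is not injective iff there is a finitely generated `H' ≤ H` with
`rank ⟨H', g⟩ ≤ rank H'`. -/
theorem dependence_iff_fg_subgroup_rank [Group F] [IsFreeGroup F] (H : Subgroup F) (g : F) :
    ¬ Function.Injective (phi H g) ↔
      ∃ H' : Subgroup F, H' ≤ H ∧ H'.FG ∧
        rk (H' ⊔ Subgroup.closure {g}) ≤ rk H' :=
  dependence_iff_fg_subgroup_rank_general (fun K _ => subgroupIsFreeOfIsFree K) H g
end

section
/- Let H be a finitely generated subgroup of a free group F. Then there exists a finite subset S ⊆ F such that dep(H), the set of all elements of F that depend on H, equals the finite union of double cosets ∪_{s ∈ S} H s H. Consequently Dep(H) is generated by H together with the finite set S, and in particular Dep(H) is finitely generated. -/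
open scoped Monoid.Coprod

variable {F : Type*}

/-!
Let `F` be free, and let `A = H * E` with `E` finite be the vertex set of an `H`-invariant subtree
of the Cayley tree of `F`. If `g ∉ A * A⁻¹`, then `A` and `g • A` are disjoint, and enlarging `A`
one `H`-orbit at a time leads to an `H`-invariant subtree `B` that is disjoint from `g • B` but
joined to it by an edge, from `u ∈ B` to `g * v` with `v ∈ B`. Let `U` be the half-tree beyond this
edge, and `V` the half-tree beyond the image of the reversed edge under `g⁻¹`, so that `g` maps the
complement of `V` onto `U`. Both half-trees hang off `B`, and so do their translates under `H`,
which are therefore pairwise disjoint. Now `H` and `⟨g⟩` play ping-pong with `U ∪ V` and its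
complement, so `φ_g` is injective. Hence every element depending on `H` lies in
`A * A⁻¹ = H * (E * E⁻¹) * H`; since `dep H` is invariant under multiplication by `H` on both
sides, it is a finite union of double cosets.
-/

section Cayley

open SimpleGraph

open scoped Pointwise

variable {G : Type*} [Group G] {X : Set G} {H : Subgroup G} {A E : Set G}

theorem mulCayley_reachable_mul {s : G} (hs : s ∈ X) (w : G) :
    (mulCayley X).Reachable w (w * s) := by
  by_cases h : w = w * s
  · rw [← h]
  · exact Adj.reachable ((mulCayley_adj' X _ _).2 ⟨h, s, hs, .inl rfl⟩)

theorem mulCayley_preconnected (hX : Subgroup.closure X = ⊤) : (mulCayley X).Preconnected := by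
  suffices h : ∀ w, (mulCayley X).Reachable 1 w from fun v w => (h v).symm.trans (h w)
  intro w
  induction hX ▸ Subgroup.mem_top w using Subgroup.closure_induction_right with
  | one => rfl
  | mul_right w _ s hs ih => exact ih.trans (mulCayley_reachable_mul hs w)
  | mul_inv_cancel w _ s hs ih =>
    exact ih.trans (by simpa using (mulCayley_reachable_mul hs (w * s⁻¹)).symm)

theorem mulCayley_induce_smul_connected (g : G) (hA : ((mulCayley X).induce A).Connected) :
    ((mulCayley X).induce (g • A)).Connected := by
  let f : (mulCayley X).induce A →g (mulCayley X).induce (g • A) :=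
    { toFun := fun a => ⟨g • (a : G), Set.smul_mem_smul_set a.2⟩
      map_rel' := fun h => mulCayley_adj_mul_iff_right.2 h }
  refine hA.map f ?_
  rintro ⟨_, a, ha, rfl⟩
  exact ⟨⟨a, ha⟩, rfl⟩

theorem induce_union_connected_of_forall_adj {V : Type*} {Γ : SimpleGraph V} {s t : Set V}
    (hs : (Γ.induce s).Connected) (ht : ∀ w ∈ t, ∃ u ∈ s, Γ.Adj u w) :
    (Γ.induce (s ∪ t)).Connected := by
  obtain ⟨v, hv⟩ := hs.nonempty
  refine induce_connected_of_patches v (.inl hv) ?_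
  rintro w (hw | hw)
  · exact ⟨s, Set.subset_union_left, hv, hw, hs.preconnected _ _⟩
  · obtain ⟨u, hu, huw⟩ := ht w hw
    have hsw := connected_induce_union hs.preconnected Preconnected.of_subsingleton hu
      (Set.mem_singleton w) huw
    exact ⟨s ∪ {w}, Set.union_subset_union_right s (by simpa using hw), .inl hv, .inr rfl,
      hsw.preconnected _ _⟩

theorem mulCayley_induce_closure_mul_connected {T : Set G} (hTE : insert 1 T ⊆ E)
    (hE : ((mulCayley X).induce E).Connected) :
    ((mulCayley X).induce ((Subgroup.closure T : Set G) * E)).Connected := by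
  have h_one : 1 ∈ E := hTE (Set.mem_insert 1 T)
  have mem_A {h : G} (hh : h ∈ Subgroup.closure T) : h ∈ (Subgroup.closure T : Set G) * E :=
    ⟨h, hh, 1, h_one, mul_one h⟩
  have translate {h x y : G} (hh : h ∈ Subgroup.closure T) (hx : x ∈ E) (hy : y ∈ E) :
      ((mulCayley X).induce ((Subgroup.closure T : Set G) * E)).Reachable
        ⟨h * x, Set.mul_mem_mul hh hx⟩ ⟨h * y, Set.mul_mem_mul hh hy⟩ :=
    ((mulCayley_induce_smul_connected h hE).preconnected
      ⟨h * x, x, hx, rfl⟩ ⟨h * y, y, hy, rfl⟩).map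
        (induceHomOfLE _ (Set.smul_set_subset_mul hh)).toHom
  have reachable_closure (h : G) (hh : h ∈ Subgroup.closure T) :
      ((mulCayley X).induce ((Subgroup.closure T : Set G) * E)).Reachable
        ⟨1, mem_A (one_mem _)⟩ ⟨h, mem_A hh⟩ := by
    induction hh using Subgroup.closure_induction_right with
    | one => rfl
    | mul_right h hh t ht ih =>
      exact ih.trans (by simpa using translate hh h_one (hTE (.inr ht)))
    | mul_inv_cancel h hh t ht ih =>
      have hht := mul_mem hh (inv_mem (Subgroup.subset_closure ht))
      exact ih.trans (by simpa using translate hht (hTE (.inr ht)) h_one)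
  refine (connected_iff_exists_forall_reachable _).2 ⟨⟨1, mem_A (one_mem _)⟩, ?_⟩
  rintro ⟨_, h, hh, x, hx, rfl⟩
  exact (reachable_closure h hh).trans (by simpa using translate hh h_one hx)

/-- A set of vertices of the Cayley graph of `G` with respect to `X` that is connected and
invariant under left multiplication by `H`. If `X` is a basis of a free group, these are the vertex
sets of the `H`-invariant subtrees. -/
structure IsInvariantConnected (X : Set G) (H : Subgroup G) (A : Set G) : Prop where
  mul_mem : ∀ h ∈ H, ∀ a ∈ A, h * a ∈ A
  connected : ((mulCayley X).induce A).Connected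

theorem exists_finite_isInvariantConnected_mul (hX : Subgroup.closure X = ⊤) (hH : H.FG) :
    ∃ E : Set G, E.Finite ∧ IsInvariantConnected X H (H * E) := by
  classical
  obtain ⟨T, rfl⟩ := hH
  obtain ⟨E, hTE, hE⟩ := extend_finset_to_connected (mulCayley_preconnected hX)
    (Finset.insert_nonempty 1 T)
  refine ⟨E, E.finite_toSet, ?_, mulCayley_induce_closure_mul_connected (mod_cast hTE) hE⟩
  rintro h hh _ ⟨k, hk, x, hx, rfl⟩
  exact ⟨h * k, mul_mem hh hk, x, hx, mul_assoc h k x⟩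

theorem IsInvariantConnected.union (hA : IsInvariantConnected X H A) {w : G}
    (hw : ∃ u ∈ A, (mulCayley X).Adj u w) : IsInvariantConnected X H (A ∪ H * {w}) where
  mul_mem := by
    rintro h hh a (ha | ⟨k, hk, _, rfl, rfl⟩)
    · exact .inl (hA.mul_mem h hh a ha)
    · exact .inr ⟨h * k, H.mul_mem hh hk, _, rfl, mul_assoc h k _⟩
  connected := by
    obtain ⟨u, hu, huw⟩ := hw
    refine induce_union_connected_of_forall_adj hA.connected ?_
    rintro _ ⟨h, hh, _, rfl, rfl⟩
    exact ⟨h * u, hA.mul_mem h hh u hu, mulCayley_adj_mul_iff_right.2 huw⟩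

theorem IsInvariantConnected.disjoint_smul_union {g w : G} (hA : IsInvariantConnected X H A)
    (hg : Disjoint A (g • A)) (not_adj : ∀ u ∈ A, ∀ v ∈ g • A, ¬(mulCayley X).Adj u v)
    (hw : ∃ u ∈ A, (mulCayley X).Adj u w) :
    Disjoint (A ∪ H * {w}) (g • (A ∪ H * {w})) := by
  obtain ⟨u, hu, huw⟩ := hw
  have g_notMem : g ∉ H := fun hgH =>
    Set.disjoint_left.1 hg (hA.mul_mem g hgH u hu) (Set.smul_mem_smul_set hu)
  rw [Set.disjoint_left]
  rintro x (hx | ⟨h, hh, _, rfl, rfl⟩) ⟨y, hy | ⟨k, hk, _, rfl, rfl⟩, hyx⟩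
  · exact Set.disjoint_left.1 hg hx ⟨y, hy, hyx⟩
  · refine not_adj x hx (g • (k * u)) (Set.smul_mem_smul_set (hA.mul_mem k hk u hu)) ?_
    subst hyx
    exact (mulCayley_adj_mul_iff_right.2 (mulCayley_adj_mul_iff_right.2 huw)).symm
  · exact not_adj (h * u) (hA.mul_mem h hh u hu) _ ⟨y, hy, hyx⟩ (mulCayley_adj_mul_iff_right.2 huw)
  · have hgk : g * k = h := by simpa [← mul_assoc] using hyx
    exact g_notMem ((H.mul_mem_cancel_right hk).1 (hgk ▸ hh))

theorem exists_isInvariantConnected_adjacent {g : G} (hX : Subgroup.closure X = ⊤)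
    (hA : IsInvariantConnected X H A) (hg : Disjoint A (g • A)) :
    ∃ B, IsInvariantConnected X H B ∧ Disjoint B (g • B) ∧
      ∃ u ∈ B, ∃ v ∈ g • B, (mulCayley X).Adj u v := by
  by_contra! not_adj
  obtain ⟨b, hb⟩ := hA.connected.nonempty
  have exists_mem (w : G) :
      ∃ B, IsInvariantConnected X H B ∧ Disjoint B (g • B) ∧ b ∈ B ∧ w ∈ B := by
    have hbw := (reachable_iff_reflTransGen b w).1 (mulCayley_preconnected hX b w)
    induction hbw with
    | refl => exact ⟨A, hA, hg, hb, hb⟩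
    | @tail u w _ huw ih =>
      obtain ⟨B, hB, hgB, hbB, huB⟩ := ih
      exact ⟨B ∪ H * {w}, hB.union ⟨u, huB, huw⟩,
        hB.disjoint_smul_union hgB (not_adj B hB hgB) ⟨u, huB, huw⟩,
        .inl hbB, .inr ⟨1, one_mem H, w, rfl, one_mul w⟩⟩
  obtain ⟨B, -, hgB, hbB, hgbB⟩ := exists_mem (g * b)
  exact Set.disjoint_left.1 hgB hgbB (Set.smul_mem_smul_set hbB)

end Cayley

section HalfTree

open SimpleGraph FreeGroup

open scoped Pointwise

theorem inv_mk_singleton {α : Type*} (s : α × Bool) : (mk [s])⁻¹ = mk [(s.1, !s.2)] := by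
  rw [inv_mk]
  rfl

theorem exists_eq_mul_mk_of_mulCayley_adj {α : Type*} {u v : FreeGroup α}
    (h : (mulCayley (Set.range of)).Adj u v) : ∃ s : α × Bool, v = u * mk [s] := by
  obtain ⟨-, _, ⟨i, rfl⟩, rfl | rfl⟩ := (mulCayley_adj' _ _ _).1 h
  · exact ⟨(i, true), rfl⟩
  · exact ⟨(i, false), (mul_inv_cancel_right v (of i)).symm⟩

variable {α : Type*} [DecidableEq α] {s t : α × Bool} {a p u v : FreeGroup α}

theorem mem_startsWith_iff : a ∈ startsWith s ↔ a.toWord.head? = some s := by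
  rw [List.head?_eq_getElem?]
  rfl

theorem mk_mem_startsWith_iff : mk [t] ∈ startsWith s ↔ t = s := by
  simp [mem_startsWith_iff, toWord_mk, reduce]

theorem mk_mul_mem_startsWith_iff : mk [s] * a ∈ startsWith s ↔ a ∉ startsWith (s.1, !s.2) := by
  refine ⟨fun hsa ha => ?_, startsWith_mk_mul a⟩
  rw [mem_startsWith_iff] at hsa ha
  obtain ⟨l, hl⟩ := List.head?_eq_some_iff.1 ha
  obtain ⟨not_cancel, hl_red⟩ := List.isChain_cons.1 (hl ▸ isReduced_toWord)
  have hword : (mk [s] * a).toWord = l := by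
    rw [← mk_toWord (x := a), hl, mul_mk, toWord_mk]
    exact (reduce.Step.eq Red.Step.cons_not).trans (IsReduced.reduce_eq hl_red)
  simpa using not_cancel s (hword ▸ hsa)

theorem toWord_mul_of_mem_startsWith (hp : p⁻¹ ∉ startsWith t) (ha : a ∈ startsWith t) :
    (p * a).toWord = p.toWord ++ a.toWord := by
  rw [mem_startsWith_iff] at hp ha
  rw [toWord_mul, IsReduced.reduce_eq]
  refine List.isChain_append.2 ⟨isReduced_toWord, isReduced_toWord, fun x hx y hy hxy => ?_⟩
  obtain rfl : t = y := by simpa [ha] using hy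
  by_contra hne
  have hinv : (x.1, !x.2) = t := Prod.ext hxy (Bool.not_eq.2 hne)
  exact hp (by simp_all [toWord_inv, invRev])

theorem mul_mem_startsWith_iff (hp : p ≠ 1) (hpt : p⁻¹ ∉ startsWith t) (ha : a ∈ startsWith t) :
    p * a ∈ startsWith s ↔ p ∈ startsWith s := by
  simp only [mem_startsWith_iff, toWord_mul_of_mem_startsWith hpt ha]
  rw [List.head?_append_of_ne_nil _ (toWord_eq_nil_iff.not.2 hp)]

theorem eq_one_and_eq_of_mul_mk_mem_startsWith (ha : a ∉ startsWith s)
    (hat : a * mk [t] ∈ startsWith s) : a = 1 ∧ t = s := by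
  have mk_mem : mk [t] ∈ startsWith t := mk_mem_startsWith_iff.2 rfl
  by_cases ha1 : a = 1
  · subst ha1
    exact ⟨rfl, mk_mem_startsWith_iff.1 (by simpa using hat)⟩
  by_cases hinv : a⁻¹ ∈ startsWith t
  · have hat_inv : (a * mk [t])⁻¹ ∉ startsWith (t.1, !t.2) := by
      rw [mul_inv_rev, inv_mk_singleton, mk_mul_mem_startsWith_iff]
      simpa using hinv
    have ha' := (mul_mem_startsWith_iff (startsWith.ne_one _ hat) hat_inv
      (mk_mem_startsWith_iff.2 rfl)).2 hat
    rw [← inv_mk_singleton, mul_inv_cancel_right] at ha'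
    exact absurd ha' ha
  · exact absurd ((mul_mem_startsWith_iff ha1 hinv mk_mem).1 hat) ha

/-- The half-tree of the Cayley tree of `FreeGroup α` that the edge from `u` to `u * mk [s]` points
to, i.e. the set of vertices separated by this edge from `u`. -/
def halfTree (u : FreeGroup α) (s : α × Bool) : Set (FreeGroup α) := {a | u⁻¹ * a ∈ startsWith s}

theorem notMem_halfTree (u : FreeGroup α) (s : α × Bool) : u ∉ halfTree u s := by
  simp [halfTree, mem_startsWith_iff]

theorem smul_halfTree : p • halfTree u s = halfTree (p * u) s := by
  ext a
  simp [halfTree, Set.mem_smul_set_iff_inv_smul_mem, mul_assoc]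

theorem compl_halfTree : (halfTree u s)ᶜ = halfTree (u * mk [s]) (s.1, !s.2) := by
  ext a
  simp only [halfTree, Set.mem_compl_iff, Set.mem_ofPred_eq, mul_inv_rev, inv_mk_singleton,
    mul_assoc, mk_mul_mem_startsWith_iff, Bool.not_not]

theorem eq_and_eq_of_mul_mk_mem_halfTree (hv : v ∉ halfTree u s)
    (hvt : v * mk [t] ∈ halfTree u s) : v = u ∧ t = s := by
  obtain ⟨huv, rfl⟩ := eq_one_and_eq_of_mul_mk_mem_startsWith (a := u⁻¹ * v) hv
    (by simpa [halfTree, mul_assoc] using hvt)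
  exact ⟨(inv_mul_eq_one.1 huv).symm, rfl⟩

theorem disjoint_halfTree_halfTree {u' : FreeGroup α} {s' : α × Bool} (hu : u ∉ halfTree u' s')
    (hu' : u' ∉ halfTree u s) (hne : (u, s) ≠ (u', s')) :
    Disjoint (halfTree u s) (halfTree u' s') := by
  rw [Set.disjoint_left]
  intro a ha ha'
  by_cases huu' : u = u'
  · subst huu'
    exact Set.disjoint_left.1 (startsWith.disjoint_iff_ne.2 fun h => hne (by rw [h])) ha ha'
  · have hp : u'⁻¹ * u ≠ 1 := fun h => huu' (inv_mul_eq_one.1 h).symm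
    refine hu ((mul_mem_startsWith_iff hp ?_ ha).1 ?_)
    · simpa [halfTree] using hu'
    · simpa [mul_assoc, halfTree] using ha'

theorem disjoint_halfTree_of_connected {B : Set (FreeGroup α)}
    (hB : ((mulCayley (Set.range of)).induce B).Connected) (hu : u ∈ B) (hus : u * mk [s] ∉ B) :
    Disjoint B (halfTree u s) := by
  rw [Set.disjoint_left]
  intro a ha hau
  obtain ⟨walk⟩ := hB.preconnected ⟨u, hu⟩ ⟨a, ha⟩
  obtain ⟨d, -, hfst, hsnd⟩ := walk.exists_boundary_dart {x | (x : FreeGroup α) ∉ halfTree u s}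
    (notMem_halfTree u s) (not_not.2 hau)
  obtain ⟨t, ht⟩ := exists_eq_mul_mk_of_mulCayley_adj (induce_adj.1 d.adj)
  rw [Set.mem_ofPred_eq, not_not, ht] at hsnd
  obtain ⟨hdu, rfl⟩ := eq_and_eq_of_mul_mk_mem_halfTree hfst hsnd
  exact hus (hdu ▸ ht ▸ d.snd.2)

theorem disjoint_halfTree_halfTree_of_connected {B : Set (FreeGroup α)}
    (hB : ((mulCayley (Set.range of)).induce B).Connected) (hu : u ∈ B) (hus : u * mk [s] ∉ B)
    (hv : v ∈ B) (hvt : v * mk [t] ∉ B) (hne : (u, s) ≠ (v, t)) :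
    Disjoint (halfTree u s) (halfTree v t) :=
  disjoint_halfTree_halfTree (Set.disjoint_left.1 (disjoint_halfTree_of_connected hB hv hvt) hu)
    (Set.disjoint_left.1 (disjoint_halfTree_of_connected hB hu hus) hv) hne

theorem IsInvariantConnected.smul_union_halfTree_subset_compl {H : Subgroup (FreeGroup α)}
    {B : Set (FreeGroup α)} {h : FreeGroup α} (hB : IsInvariantConnected (Set.range of) H B)
    (hu : u ∈ B) (hus : u * FreeGroup.mk [s] ∉ B) (hv : v ∈ B) (hvt : v * FreeGroup.mk [t] ∉ B)
    (hst : s ≠ t) (hh : h ∈ H) (hh1 : h ≠ 1) :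
    h • (halfTree u s ∪ halfTree v t) ⊆ (halfTree u s ∪ halfTree v t)ᶜ := by
  have mul_notMem {w : FreeGroup α} {r : α × Bool} (hw : w * FreeGroup.mk [r] ∉ B) :
      h * w * FreeGroup.mk [r] ∉ B := fun hmem =>
    hw (by simpa [mul_assoc] using hB.mul_mem h⁻¹ (inv_mem hh) _ hmem)
  have disjoint_smul {w w' : FreeGroup α} {r r' : α × Bool} (hw : w ∈ B)
      (hwr : w * FreeGroup.mk [r] ∉ B) (hw' : w' ∈ B) (hwr' : w' * FreeGroup.mk [r'] ∉ B)
      (hne : (h * w, r) ≠ (w', r')) :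
      Disjoint (h • halfTree w r) (halfTree w' r') := by
    rw [smul_halfTree]
    exact disjoint_halfTree_halfTree_of_connected hB.connected (hB.mul_mem h hh w hw)
      (mul_notMem hwr) hw' hwr' hne
  rw [Set.subset_compl_iff_disjoint_right, Set.smul_set_union, Set.disjoint_union_left,
    Set.disjoint_union_right, Set.disjoint_union_right]
  exact ⟨⟨disjoint_smul hu hus hu hus (by simpa using hh1),
    disjoint_smul hu hus hv hvt (by simp [hst])⟩,
    disjoint_smul hv hvt hu hus (by simp [hst.symm]),
    disjoint_smul hv hvt hv hvt (by simpa using hh1)⟩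

end HalfTree

section PingPong

open Monoid Cardinal

open scoped Pointwise

variable {G K M Ω : Type*} [Group G] [Group K] [Group M] [MulAction M Ω]

theorem coprod_injective_of_ping_pong [Infinite K] {φ : G ∗ K →* M} {Y Z : Set Ω}
    (hY : Y.Nonempty) (hZ : Z.Nonempty) (hYZ : Disjoint Y Z)
    (hG : ∀ g : G, g ≠ 1 → φ (Coprod.inl g) • Z ⊆ Y)
    (hK : ∀ k : K, k ≠ 1 → φ (Coprod.inr k) • Y ⊆ Z) : Function.Injective φ := by
  -- Both factors are replaced by their images in `G ∗ K`, since the ping-pong lemma for `CoprodI`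
  -- requires them to live in the same universe.
  let S : Bool → Subgroup (G ∗ K) := fun b =>
    cond b (Coprod.inl : G →* G ∗ K).range (Coprod.inr : K →* G ∗ K).range
  let θ : G ∗ K →* CoprodI fun b => S b := Coprod.lift
    ((CoprodI.of (M := fun b => S b) (i := true)).comp (Coprod.inl : G →* G ∗ K).rangeRestrict)
    ((CoprodI.of (M := fun b => S b) (i := false)).comp (Coprod.inr : K →* G ∗ K).rangeRestrict)
  let f : ∀ b, S b →* M := fun b => φ.comp (S b).subtype
  have hθ : (CoprodI.lift fun b => (S b).subtype).comp θ = MonoidHom.id _ := by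
    ext <;> rfl
  have hφ : (CoprodI.lift f).comp θ = φ := by ext <;> rfl
  have θ_injective : Function.Injective θ := Function.LeftInverse.injective (DFunLike.congr_fun hθ)
  have infinite_inr : Infinite (S false) :=
    Infinite.of_injective (Coprod.inr : K →* G ∗ K).rangeRestrict
      (MonoidHom.rangeRestrict_injective_iff.2 Coprod.inr_injective)
  have lift_injective : Function.Injective (CoprodI.lift f) := by
    refine CoprodI.lift_injective_of_ping_pong f (.inr ⟨false, ?_⟩) (fun b => cond b Y Z) ?_ ?_ ?_
    · exact natCast_le_aleph0.trans (aleph0_le_mk _)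
    · exact Bool.forall_bool.2 ⟨hZ, hY⟩
    · exact pairwise_disjoint_on_bool.2 hYZ
    · rintro (_ | _) (_ | _) hne
      · exact absurd rfl hne
      · rintro ⟨_, k, rfl⟩ hk
        exact hK k fun h => hk (Subtype.ext (by simp [h]))
      · rintro ⟨_, g, rfl⟩ hg
        exact hG g fun h => hg (Subtype.ext (by simp [h]))
      · exact absurd rfl hne
  rw [← hφ]
  exact lift_injective.comp θ_injective

theorem pow_succ_smul_compl_subset {a : M} {U V : Set Ω} (hUV : Disjoint U V) (ha : a • Vᶜ ⊆ U)
    (n : ℕ) : a ^ (n + 1) • Vᶜ ⊆ U := by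
  induction n with
  | zero => simpa using ha
  | succ n ih =>
    calc a ^ (n + 1 + 1) • Vᶜ = a ^ (n + 1) • a • Vᶜ := by rw [pow_succ, mul_smul]
      _ ⊆ a ^ (n + 1) • U := Set.smul_set_mono ha
      _ ⊆ a ^ (n + 1) • Vᶜ := Set.smul_set_mono hUV.subset_compl_right
      _ ⊆ U := ih

theorem zpow_smul_compl_union_subset {a : M} {U V : Set Ω} (hUV : Disjoint U V)
    (ha : a • Vᶜ ⊆ U) {n : ℤ} (hn : n ≠ 0) : a ^ n • (U ∪ V)ᶜ ⊆ U ∪ V := by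
  have ha_inv : a⁻¹ • Uᶜ ⊆ V := by
    rwa [← Set.subset_smul_set_iff, Set.compl_subset_comm, ← Set.smul_set_compl]
  rcases n with (_ | n) | n
  · exact absurd rfl hn
  · rw [Int.ofNat_eq_natCast, zpow_natCast]
    calc a ^ (n + 1) • (U ∪ V)ᶜ ⊆ a ^ (n + 1) • Vᶜ := by gcongr; exact Set.subset_union_right
      _ ⊆ U := pow_succ_smul_compl_subset hUV ha n
      _ ⊆ U ∪ V := Set.subset_union_left
  · rw [zpow_negSucc, ← inv_pow]
    calc a⁻¹ ^ (n + 1) • (U ∪ V)ᶜ ⊆ a⁻¹ ^ (n + 1) • Uᶜ := by gcongr; exact Set.subset_union_left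
      _ ⊆ V := pow_succ_smul_compl_subset hUV.symm ha_inv n
      _ ⊆ U ∪ V := Set.subset_union_right

theorem coprod_freeGroup_unit_injective_of_ping_pong {φ : G ∗ FreeGroup Unit →* M} {U V : Set Ω}
    (hUV : Disjoint U V) (hUV_compl : (U ∪ V)ᶜ.Nonempty)
    (hG : ∀ g : G, g ≠ 1 → φ (Coprod.inl g) • (U ∪ V) ⊆ (U ∪ V)ᶜ)
    (hx : φ (Coprod.inr (FreeGroup.of ())) • Vᶜ ⊆ U) : Function.Injective φ := by
  have hU : U.Nonempty :=
    (hUV_compl.mono (Set.compl_subset_compl.2 Set.subset_union_right)).smul_set.mono hx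
  refine coprod_injective_of_ping_pong hUV_compl (hU.mono Set.subset_union_left)
    disjoint_compl_left hG fun k hk => ?_
  obtain ⟨n, rfl⟩ : ∃ n : ℤ, FreeGroup.of () ^ n = k :=
    ⟨_, FreeGroup.freeGroupUnitEquivInt.symm_apply_apply k⟩
  rw [map_zpow, map_zpow]
  exact zpow_smul_compl_union_subset hUV hx fun hn => hk (by rw [hn, zpow_zero])

end PingPong

section Dependence

open Monoid

open scoped Pointwise

variable [Group F] {H : Subgroup F} {g h : F}

theorem phi_injective_of_adjacent {α : Type*} {e : F →* FreeGroup α} (he : Function.Injective e)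
    {B : Set (FreeGroup α)} (hB : IsInvariantConnected (Set.range FreeGroup.of) (H.map e) B)
    (hgB : Disjoint B (e g • B))
    (hadj : ∃ u ∈ B, ∃ v ∈ e g • B, (SimpleGraph.mulCayley (Set.range FreeGroup.of)).Adj u v) :
    Function.Injective (phi H g) := by
  classical
  obtain ⟨u, hu, _, ⟨v, hv, rfl⟩, huv⟩ := hadj
  obtain ⟨s, hs : e g * v = u * FreeGroup.mk [s]⟩ := exists_eq_mul_mk_of_mulCayley_adj huv
  have hgvs : e g * (v * FreeGroup.mk [(s.1, !s.2)]) = u := by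
    rw [← mul_assoc, hs, ← inv_mk_singleton, mul_inv_cancel_right]
  have hus : u * FreeGroup.mk [s] ∉ B := hs ▸ Set.disjoint_right.1 hgB (Set.smul_mem_smul_set hv)
  have hvs : v * FreeGroup.mk [(s.1, !s.2)] ∉ B := fun hmem =>
    Set.disjoint_left.1 hgB hu ⟨_, hmem, hgvs⟩
  have hne : s ≠ (s.1, !s.2) := by simp [Prod.ext_iff]
  refine .of_comp (f := e) ?_
  rw [← MonoidHom.coe_comp]
  refine coprod_freeGroup_unit_injective_of_ping_pong (U := halfTree u s)
    (V := halfTree v (s.1, !s.2)) ?_ ⟨u, ?_⟩ (fun h hh => ?_) ?_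
  · exact disjoint_halfTree_halfTree_of_connected hB.connected hu hus hv hvs (by simp [hne])
  · rw [Set.mem_compl_iff, Set.mem_union, not_or]
    exact ⟨notMem_halfTree u s,
      Set.disjoint_left.1 (disjoint_halfTree_of_connected hB.connected hv hvs) hu⟩
  · have hφh : e.comp (phi H g) (Coprod.inl h) = e h := by simp [phi]
    rw [hφh]
    refine hB.smul_union_halfTree_subset_compl hu hus hv hvs hne
      (Subgroup.mem_map_of_mem e h.2) ?_
    rwa [ne_eq, map_eq_one_iff e he, OneMemClass.coe_eq_one]
  · have hx : e.comp (phi H g) (Coprod.inr (FreeGroup.of ())) = e g := by simp [phi]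
    rw [hx, compl_halfTree, smul_halfTree, hgvs, Bool.not_not]

theorem phi_injective_of_disjoint {α : Type*} {e : F →* FreeGroup α} (he : Function.Injective e)
    {A : Set (FreeGroup α)} (hA : IsInvariantConnected (Set.range FreeGroup.of) (H.map e) A)
    (hg : Disjoint A (e g • A)) : Function.Injective (phi H g) := by
  obtain ⟨B, hB, hgB, hadj⟩ :=
    exists_isInvariantConnected_adjacent (FreeGroup.closure_range_of α) hA hg
  exact phi_injective_of_adjacent he hB hgB hadj

theorem exists_finite_depSet_subset_mul [IsFreeGroup F] (hH : H.FG) :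
    ∃ E : Set F, E.Finite ∧ depSet H ⊆ H * E * H := by
  let e := IsFreeGroup.toFreeGroup F
  have he : Function.Injective e.toMonoidHom := e.injective
  have hmap : (H.map e.toMonoidHom).FG :=
    (Subgroup.fg_iff_submonoid_fg _).2 (((Subgroup.fg_iff_submonoid_fg H).1 hH).map e.toMonoidHom)
  obtain ⟨E, hE, hA⟩ :=
    exists_finite_isInvariantConnected_mul (FreeGroup.closure_range_of _) hmap
  refine ⟨e ⁻¹' (E * E⁻¹), (hE.mul hE.inv).preimage e.injective.injOn, fun g hg => ?_⟩
  obtain ⟨_, ⟨_, ⟨h, hh, rfl⟩, x, hx, rfl⟩, _, ⟨_, ⟨k, hk, rfl⟩, y, hy, rfl⟩, heq⟩ :=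
    Set.not_disjoint_iff.1 fun hdisj => hg (phi_injective_of_disjoint he hA hdisj)
  replace heq : e g * (e k * y) = e h * x := heq
  refine ⟨h * (h⁻¹ * g * k), ⟨h, hh, _, ⟨x, hx, y⁻¹, Set.inv_mem_inv.2 hy, ?_⟩, rfl⟩, k⁻¹,
    inv_mem hk, ?_⟩
  · have hgk : e g * e k = e h * x * y⁻¹ := by rw [← heq]; group
    simp [mul_assoc, hgk]
  · simp [mul_assoc]

theorem Depends.mul_mul {k : F} (hg : Depends H g) (hh : h ∈ H) (hk : k ∈ H) :
    Depends H (h * g * k) := by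
  let θ (h k : H) : H ∗ FreeGroup Unit →* H ∗ FreeGroup Unit :=
    Coprod.lift Coprod.inl (FreeGroup.lift fun _ =>
      Coprod.inl h * Coprod.inr (FreeGroup.of ()) * Coprod.inl k)
  have hphi : phi H g = (phi H (h * g * k)).comp (θ ⟨h, hh⟩⁻¹ ⟨k, hk⟩⁻¹) := by
    ext <;> simp [phi, θ, mul_assoc]
  have hθ : (θ ⟨h, hh⟩ ⟨k, hk⟩).comp (θ ⟨h, hh⟩⁻¹ ⟨k, hk⟩⁻¹) = MonoidHom.id _ := by
    ext <;> simp [θ, mul_assoc]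
  intro hinj
  refine hg ?_
  rw [hphi, MonoidHom.coe_comp]
  exact hinj.comp (Function.LeftInverse.injective (DFunLike.congr_fun hθ))

theorem coe_subset_depSet : (H : Set F) ⊆ depSet H := by
  intro h hh hinj
  have heq : Coprod.inl ⟨h, hh⟩ = (Coprod.inr (FreeGroup.of ()) : H ∗ FreeGroup Unit) :=
    hinj (by simp [phi])
  exact FreeGroup.of_ne_one () (by simpa using (congrArg Coprod.snd heq).symm)

end Dependence

section DoubleCoset

open scoped Pointwise

variable {G : Type*} [Group G] {H : Subgroup G}

theorem exists_finset_eq_iUnion_doubleCoset {D E : Set G}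
    (hD : ∀ h ∈ H, ∀ g ∈ D, ∀ k ∈ H, h * g * k ∈ D) (hE : E.Finite) (hDE : D ⊆ H * E * H) :
    ∃ S : Finset G, D = ⋃ s ∈ (S : Set G), (H : Set G) * {s} * (H : Set G) := by
  refine ⟨(hE.inter_of_left D).toFinset, Set.Subset.antisymm (fun g hg => ?_) ?_⟩
  · obtain ⟨_, ⟨h, hh, s, hs, rfl⟩, k, hk, rfl⟩ := hDE hg
    have hsD : s ∈ D := by
      simpa [mul_assoc] using hD h⁻¹ (inv_mem hh) _ hg k⁻¹ (inv_mem hk)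
    exact Set.mem_iUnion₂.2 ⟨s, (hE.inter_of_left D).mem_toFinset.2 ⟨hs, hsD⟩,
      Set.mul_mem_mul (Set.mul_mem_mul hh rfl) hk⟩
  · refine Set.iUnion₂_subset fun s hs => ?_
    rintro _ ⟨_, ⟨h, hh, _, rfl, rfl⟩, k, hk, rfl⟩
    exact hD h hh _ ((hE.inter_of_left D).mem_toFinset.1 hs).2 k hk

theorem closure_iUnion_doubleCoset {S : Set G}
    (hHS : (H : Set G) ⊆ ⋃ s ∈ S, (H : Set G) * {s} * (H : Set G)) :
    Subgroup.closure (⋃ s ∈ S, (H : Set G) * {s} * (H : Set G)) = Subgroup.closure (H ∪ S) := by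
  refine le_antisymm ?_ (Subgroup.closure_mono (Set.union_subset hHS fun s hs => ?_))
  · refine (Subgroup.closure_le _).2 (Set.iUnion₂_subset fun s hs => ?_)
    rintro _ ⟨_, ⟨h, hh, _, rfl, rfl⟩, k, hk, rfl⟩
    exact mul_mem (mul_mem (Subgroup.subset_closure (.inl hh)) (Subgroup.subset_closure (.inr hs)))
      (Subgroup.subset_closure (.inl hk))
  · exact Set.mem_iUnion₂.2 ⟨s, hs, s, ⟨1, one_mem H, s, rfl, one_mul s⟩, 1, one_mem H, mul_one s⟩

end DoubleCoset

open Pointwise in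
/-- for finitely generated `H`, `dep H` is a finite union of double cosets
`H s H`, `s ∈ S`; consequently `Dep H` is generated by `H ∪ S`, and is finitely
generated. -/
theorem depSet_eq_finite_union_double_cosets [Group F] [IsFreeGroup F]
    (H : Subgroup F) (hH : H.FG) :
    ∃ S : Finset F,
      depSet H = ⋃ s ∈ (S : Set F), (H : Set F) * {s} * (H : Set F) ∧
      DepSubgroup H = Subgroup.closure ((H : Set F) ∪ (S : Set F)) ∧
      (DepSubgroup H).FG := by
  obtain ⟨E, hE, hHEH⟩ := exists_finite_depSet_subset_mul hH
  obtain ⟨S, hS⟩ := exists_finset_eq_iUnion_doubleCoset (D := depSet H)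
    (fun h hh g (hg : Depends H g) k hk => hg.mul_mul hh hk) hE hHEH
  have hDep : DepSubgroup H = Subgroup.closure (H ∪ S) := by
    rw [DepSubgroup, hS]
    exact closure_iUnion_doubleCoset (hS ▸ coe_subset_depSet)
  refine ⟨S, hS, hDep, ?_⟩
  rw [hDep, Subgroup.closure_union, Subgroup.closure_eq]
  exact hH.sup ⟨S, rfl⟩
end

section
/- Let H be a dependence-closed subgroup of a free group F and let K be a free factor of H. Then K is dependence-closed. -/
open scoped Monoid.Coprod

variable {F : Type*}

/-- `K` is a free factor of `H`: there is `K' ≤ H` such that `H` is the internal free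
product `K ∗ K'`, i.e. the canonical homomorphism `K ∗ K' → F` induced by the inclusions
is injective with range `H`. -/
def IsFreeFactorOf [Group F] (K H : Subgroup F) : Prop :=
  K ≤ H ∧ ∃ K' : Subgroup F, K' ≤ H ∧
    Function.Injective (Monoid.Coprod.lift K.subtype K'.subtype) ∧
    (Monoid.Coprod.lift K.subtype K'.subtype).range = H


/-!
Suppose `g` depends on `K`, where `H = K ∗ K'`. As `K` is a retract of `H`, the element `g` depends
on `H` as well, so it lies in `H`. Suppose it is not in `K`. Multiplying it on both sides by
elements of `K`, which does not affect dependence, we may replace it by a reduced word `u` that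
neither starts nor ends in `K`.

Any nontrivial element `p` commuting with `u` has the same property: if `p` started in `K`, then
`u * p` would be reduced and start outside `K`, whereas `p * u` either is reduced and starts in `K`
or is strictly shorter than `u * p`. In particular this holds for all the powers `u ^ n`, `n ≠ 0`,
which are nontrivial because there is no torsion. Hence `K` and `u` play ping-pong on the set of
elements of `H` whose reduced word starts outside `K` and its complement, so `u` is independent
of `K`.
-/

open Monoid Monoid.CoprodI

section ReducedWords

variable {ι : Type*} {M : ι → Type*} [∀ i, Monoid (M i)]

theorem neWord_indices_eq_of_prod_eq {i j k l : ι} {w : NeWord M i j} {w' : NeWord M k l}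
    (h : w.prod = w'.prod) : i = k ∧ j = l := by
  classical
  have hlist : w.toList = w'.toList := congrArg Word.toList (Word.equiv.symm.injective h)
  constructor
  · simpa using congrArg (fun L => L.head?.map Sigma.fst) hlist
  · simpa using congrArg (fun L => L.getLast?.map Sigma.fst) hlist

theorem neWord_prod_ne_one {i j : ι} (w : NeWord M i j) : w.prod ≠ 1 := by
  classical
  exact fun h => w.toList_ne_nil <|
    congrArg Word.toList (Word.equiv.symm.injective (a₁ := w.toWord) (a₂ := Word.empty) h)

theorem exists_neWord_prod_eq {x : CoprodI M} (hx : x ≠ 1) :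
    ∃ (i j : ι) (w : NeWord M i j), w.prod = x := by
  classical
  obtain ⟨i, j, w, hw⟩ := NeWord.of_word (Word.equiv x) fun h => hx <| by
    simpa [Word.equiv] using congrArg Word.equiv.symm h
  exact ⟨i, j, w, by rw [NeWord.prod, hw]; exact Word.equiv.symm_apply_apply x⟩

open Classical in
/-- The syllable length of an element of a free product: the number of letters of its reduced
word. -/
noncomputable def wordLength (x : CoprodI M) : ℕ :=
  (Word.equiv x).toList.length

theorem wordLength_prod (w : Word M) : wordLength w.prod = w.toList.length := by
  classical exact congrArg (fun v : Word M => v.toList.length) (Word.equiv.apply_symm_apply w)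

theorem wordLength_neWord_prod {i j : ι} (w : NeWord M i j) :
    wordLength w.prod = w.toList.length :=
  wordLength_prod w.toWord

theorem wordLength_of_mul_le {i : ι} (a : M i) (x : CoprodI M) :
    wordLength (of a * x) ≤ wordLength x + 1 := by
  classical
  have length_rcons (p : Word.Pair M i) : p.tail.toList.length ≤ (Word.rcons p).toList.length ∧
      (Word.rcons p).toList.length ≤ p.tail.toList.length + 1 := by
    by_cases h : p.head = 1 <;> simp [Word.rcons, h]
  obtain ⟨w, rfl⟩ := Word.equiv.symm.surjective x
  obtain ⟨p, rfl⟩ := (Word.equivPair i).symm.surjective w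
  change wordLength (of a * (Word.rcons p).prod) ≤ wordLength (Word.rcons p).prod + 1
  have : of a * (Word.rcons p).prod = (Word.rcons { p with head := a * p.head }).prod := by
    simp [mul_assoc]
  rw [this, wordLength_prod, wordLength_prod]
  exact (length_rcons _).2.trans (Nat.add_le_add_right (length_rcons p).1 1)

theorem wordLength_list_prod_le (L : List (Σ i, M i)) :
    wordLength (L.map fun l => of l.2).prod ≤ L.length := by
  induction L with
  | nil => exact (wordLength_prod Word.empty).le
  | cons l L ih =>
    rw [List.map_cons, List.prod_cons, List.length_cons]
    exact (wordLength_of_mul_le l.2 _).trans (Nat.add_le_add_right ih 1)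

theorem wordLength_mul_le (x y : CoprodI M) :
    wordLength (x * y) ≤ wordLength x + wordLength y := by
  classical
  obtain ⟨v, rfl⟩ := Word.equiv.symm.surjective x
  obtain ⟨w, rfl⟩ := Word.equiv.symm.surjective y
  change wordLength (v.prod * w.prod) ≤ wordLength v.prod + wordLength w.prod
  rw [wordLength_prod, wordLength_prod]
  simpa [Word.prod] using wordLength_list_prod_le (v.toList ++ w.toList)

theorem exists_neWord_prod_eq_of_mul {i j : ι} (w : NeWord M i j) :
    ∃ (a : M i) (x : CoprodI M),
      w.prod = of a * x ∧ wordLength x < wordLength w.prod := by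
  obtain ⟨L, hL⟩ := List.head?_eq_some_iff.1 w.toList_head?
  refine ⟨w.head, (L.map fun l => of l.2).prod, ?_, ?_⟩
  · simp [NeWord.prod, Word.prod, NeWord.toWord, hL]
  · simpa [wordLength_neWord_prod, hL, Nat.lt_succ_iff] using wordLength_list_prod_le L

theorem exists_neWord_prod_eq_mul_of {i j : ι} (w : NeWord M i j) :
    ∃ (x : CoprodI M) (b : M j), w.prod = x * of b ∧ wordLength x < wordLength w.prod := by
  obtain ⟨L, hL⟩ := List.getLast?_eq_some_iff.1 w.toList_getLast?
  refine ⟨(L.map fun l => of l.2).prod, w.last, ?_, ?_⟩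
  · simp [NeWord.prod, Word.prod, NeWord.toWord, hL]
  · simpa [wordLength_neWord_prod, hL, Nat.lt_succ_iff] using wordLength_list_prod_le L

theorem wordLength_neWord_append_prod {i j k l : ι} (v : NeWord M i j) (hjk : j ≠ k)
    (w : NeWord M k l) :
    wordLength (v.append hjk w).prod = wordLength v.prod + wordLength w.prod := by
  simp only [wordLength_neWord_prod, NeWord.toList, List.length_append]

theorem wordLength_neWord_prod_mul_lt {i j k : ι} (v : NeWord M i j) (w : NeWord M j k) :
    wordLength (v.prod * w.prod) < wordLength v.prod + wordLength w.prod := by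
  obtain ⟨x, b, hv, hx⟩ := exists_neWord_prod_eq_mul_of v
  obtain ⟨a, y, hw, hy⟩ := exists_neWord_prod_eq_of_mul w
  calc wordLength (v.prod * w.prod) = wordLength (x * (of (b * a) * y)) := by
        simp only [hv, hw, map_mul, mul_assoc]
    _ ≤ wordLength x + (wordLength y + 1) :=
        (wordLength_mul_le _ _).trans (Nat.add_le_add_left (wordLength_of_mul_le _ _) _)
    _ < wordLength v.prod + wordLength w.prod := by lia

theorem not_commute_neWord_prod {i j k l : ι} (u : NeWord M j k) (hj : j ≠ i) (hk : k ≠ i)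
    (p : NeWord M i l) : ¬ Commute p.prod u.prod := by
  intro hcomm
  have hup : (u.append hk p).prod = p.prod * u.prod := by rw [NeWord.append_prod, hcomm.eq]
  rcases eq_or_ne l j with rfl | hl
  · have hlt := wordLength_neWord_prod_mul_lt p u
    rw [← hup, wordLength_neWord_append_prod, add_comm] at hlt
    exact hlt.false
  · exact hj (neWord_indices_eq_of_prod_eq (hup.trans (NeWord.append_prod (hne := hl)).symm)).1

variable {G : ι → Type*} [∀ i, Group (G i)]

theorem exists_eq_of_mul_neWord_mul_of {i : ι} {g : CoprodI G}
    (hg : g ∉ (of : G i →* CoprodI G).range) :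
    ∃ (a b : G i) (j k : ι) (u : NeWord G j k), j ≠ i ∧ k ≠ i ∧ g = of a * u.prod * of b := by
  induction hn : wordLength g using Nat.strong_induction_on generalizing g with
  | _ n ih =>
  obtain ⟨j, k, w, rfl⟩ := exists_neWord_prod_eq (ne_of_mem_of_not_mem (one_mem _) hg).symm
  subst hn
  rcases eq_or_ne j i with rfl | hj
  · obtain ⟨a, x, hw, hx⟩ := exists_neWord_prod_eq_of_mul w
    rw [hw, Subgroup.mul_mem_cancel_left _ (Set.mem_range_self a)] at hg
    obtain ⟨a', b, j', k', u, hj', hk', rfl⟩ := ih _ hx hg rfl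
    exact ⟨a * a', b, j', k', u, hj', hk', by simp only [hw, map_mul, mul_assoc]⟩
  rcases eq_or_ne k i with rfl | hk
  · obtain ⟨x, b, hw, hx⟩ := exists_neWord_prod_eq_mul_of w
    rw [hw, Subgroup.mul_mem_cancel_right _ (Set.mem_range_self b)] at hg
    obtain ⟨a, b', j', k', u, hj', hk', rfl⟩ := ih _ hx hg rfl
    exact ⟨a, b' * b, j', k', u, hj', hk', by simp only [hw, map_mul, mul_assoc]⟩
  · exact ⟨1, 1, j, k, w, hj, hk, by simp⟩

theorem exists_neWord_of_commute {i j k : ι} (u : NeWord G j k) (hj : j ≠ i) (hk : k ≠ i)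
    {x : CoprodI G} (hx : x ≠ 1) (hcomm : Commute x u.prod) :
    ∃ (l m : ι) (p : NeWord G l m), l ≠ i ∧ m ≠ i ∧ p.prod = x := by
  obtain ⟨l, m, p, rfl⟩ := exists_neWord_prod_eq hx
  refine ⟨l, m, p, ?_, ?_, rfl⟩
  · rintro rfl
    exact not_commute_neWord_prod u hj hk p hcomm
  · rintro rfl
    exact not_commute_neWord_prod u hj hk p.inv (by simpa using hcomm)

end ReducedWords

section PingPong

open scoped Pointwise

/-- The binary free product as an indexed one, so that reduced words are available for it. -/
def coprodEquivCoprodI (M : Bool → Type*) [∀ b, Monoid (M b)] :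
    M false ∗ M true ≃* CoprodI M :=
  MonoidHom.toMulEquiv (Coprod.lift of of)
    (CoprodI.lift fun b => match b with
      | false => Coprod.inl
      | true => Coprod.inr)
    (by ext <;> simp)
    (by ext b; cases b <;> simp)

theorem lift_comp_coprodEquivCoprodI {M : Bool → Type*} [∀ b, Monoid (M b)] {N : Type*}
    [Monoid N] (f : ∀ b, M b →* N) :
    (CoprodI.lift f).comp (coprodEquivCoprodI M).toMonoidHom =
      Coprod.lift (f false) (f true) := by
  ext <;> simp [coprodEquivCoprodI]

variable {A B G α : Type*} [Group A] [Group B] [Group G] [MulAction G α]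

theorem injective_of_smul_subset (f : A →* G) {X Y : Set α} (hX : X.Nonempty)
    (hXY : Disjoint X Y) (h : ∀ a, a ≠ 1 → f a • X ⊆ Y) : Function.Injective f := by
  refine (injective_iff_map_eq_one f).2 fun a ha => by_contra fun ha1 => ?_
  obtain ⟨x, hx⟩ := hX
  exact hXY.notMem_of_mem_left hx (h a ha1 (by simpa [ha] using hx))

theorem coprod_lift_injective_of_ping_pong (f : A →* G) (g : B →* G) (hB : 3 ≤ Cardinal.mk B)
    {X Y : Set α} (hX : X.Nonempty) (hY : Y.Nonempty) (hXY : Disjoint X Y)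
    (hf : ∀ a, a ≠ 1 → f a • Y ⊆ X) (hg : ∀ b, b ≠ 1 → g b • X ⊆ Y) :
    Function.Injective (Coprod.lift f g) := by
  have hfinj := injective_of_smul_subset f hY hXY.symm hf
  have hginj := injective_of_smul_subset g hX hXY hg
  let M (b : Bool) : Subgroup G := cond b g.range f.range
  let X' (b : Bool) : Set α := cond b Y X
  let e := (MulEquiv.coprodCongr (MonoidHom.ofInjective hfinj) (MonoidHom.ofInjective hginj)).trans
    (coprodEquivCoprodI fun b => M b)
  have hM : Function.Injective (CoprodI.lift fun b => (M b).subtype) := by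
    refine lift_injective_of_ping_pong _ (.inr ⟨true, ?_⟩) X' (by simp [X', hX, hY]) ?_ ?_
    · have hcard := Cardinal.lift_mk_eq'.2 ⟨(MonoidHom.ofInjective hginj).toEquiv⟩
      rw [← Cardinal.lift_le, Cardinal.lift_ofNat] at hB ⊢
      exact hB.trans_eq hcard
    · rintro (_ | _) (_ | _) h
      exacts [(h rfl).elim, hXY, hXY.symm, (h rfl).elim]
    · rintro (_ | _) (_ | _) h
      · exact (h rfl).elim
      · rintro ⟨_, a, rfl⟩ ha
        exact hf a fun h => ha (by ext; simp [h])
      · rintro ⟨_, b, rfl⟩ hb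
        exact hg b fun h => hb (by ext; simp [h])
      · exact (h rfl).elim
  have hlift : Coprod.lift f g = (CoprodI.lift fun b => (M b).subtype).comp e.toMonoidHom := by
    ext <;> simp [e, coprodEquivCoprodI, M, MonoidHom.ofInjective_apply]
  rw [hlift]
  exact hM.comp e.injective

theorem phi_injective_of_ping_pong {H : Subgroup G} {g : G} {X : Set α} (hX : X.Nonempty)
    (hXc : Xᶜ.Nonempty) (hH : ∀ h ∈ H, h ≠ 1 → h • X ⊆ Xᶜ)
    (hg : ∀ n : ℤ, n ≠ 0 → g ^ n • Xᶜ ⊆ X) : Function.Injective (phi H g) := by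
  refine coprod_lift_injective_of_ping_pong _ _ ?_ hXc hX disjoint_compl_left
    (fun h hh => hH h h.2 (by simpa using hh)) ?_
  · exact (Cardinal.natCast_le_aleph0 (n := 3)).trans (Cardinal.aleph0_le_mk _)
  · refine FreeGroup.freeGroupUnitEquivInt.forall_congr_left.2 fun n hn => ?_
    change FreeGroup.of () ^ n ≠ 1 at hn
    change FreeGroup.lift _ (FreeGroup.of () ^ n) • Xᶜ ⊆ X
    rw [map_zpow, FreeGroup.lift_apply_of]
    exact hg n fun h => hn (by rw [h, zpow_zero])

end PingPong

section Depends

variable {G : Type*} [Group F] [Group G]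

theorem depends_of_mem {K : Subgroup F} {g : F} (hg : g ∈ K) : Depends K g := by
  intro h
  have : (Coprod.inl ⟨g, hg⟩ : ↥K ∗ FreeGroup Unit) = Coprod.inr (FreeGroup.of ()) :=
    h (by simp [phi])
  simpa using congrArg Coprod.snd this

theorem depends_map_iff {f : G →* F} (hf : Function.Injective f) {K : Subgroup G} {g : G} :
    Depends (K.map f) (f g) ↔ Depends K g := by
  let e : ↥K ∗ FreeGroup Unit ≃* ↥(K.map f) ∗ FreeGroup Unit :=
    MulEquiv.coprodCongr (K.equivMapOfInjective f hf) (.refl _)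
  have hphi : (phi (K.map f) (f g)).comp e.toMonoidHom = f.comp (phi K g) := by
    ext <;> simp [phi, e]
  have hfun : phi (K.map f) (f g) ∘ e = f ∘ phi K g := congrArg DFunLike.coe hphi
  rw [Depends, Depends, ← Function.Injective.of_comp_iff' _ e.bijective, hfun,
    hf.of_comp_iff]

theorem Depends.of_mul_mul {K : Subgroup F} {g : F} (a b : K) (h : Depends K (a * g * b)) :
    Depends K g := by
  let τ (a b : K) : (↥K ∗ FreeGroup Unit) →* ↥K ∗ FreeGroup Unit :=
    Coprod.lift Coprod.inl
      (FreeGroup.lift fun _ => Coprod.inl a * Coprod.inr (FreeGroup.of ()) * Coprod.inl b)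
  have hτ : (τ a⁻¹ b⁻¹).comp (τ a b) = .id _ := by
    ext <;> simp [τ, mul_assoc]
  have hphi : phi K (a * g * b) = (phi K g).comp (τ a b) := by
    ext <;> simp [phi, τ]
  refine fun hg => h ?_
  rw [hphi]
  exact hg.comp (Function.LeftInverse.injective (DFunLike.congr_fun hτ))

theorem Depends.of_retraction {K H : Subgroup F} (hKH : K ≤ H) {r : H →* K}
    (hr : r.comp (Subgroup.inclusion hKH) = .id K) {g : F} (hg : Depends K g) :
    Depends H g := by
  have hphi : phi K g = (phi H g).comp (Coprod.map (Subgroup.inclusion hKH) (.id _)) := by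
    ext <;> simp [phi]
  have hleft : (Coprod.map r (.id (FreeGroup Unit))).comp
      (Coprod.map (Subgroup.inclusion hKH) (.id _)) = .id _ := by
    rw [Coprod.map_comp_map, hr, MonoidHom.id_comp, Coprod.map_id_id]
  refine fun h => hg ?_
  rw [hphi]
  exact h.comp (Function.LeftInverse.injective (DFunLike.congr_fun hleft))

theorem IsFreeFactorOf.exists_retraction {K H : Subgroup F} (hK : IsFreeFactorOf K H) :
    ∃ r : H →* K, r.comp (Subgroup.inclusion hK.1) = .id K := by
  obtain ⟨hKH, K', -, hinj, rfl⟩ := hK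
  refine ⟨Coprod.fst.comp (MonoidHom.ofInjective hinj).symm.toMonoidHom, ?_⟩
  ext k
  have : (MonoidHom.ofInjective hinj).symm (Subgroup.inclusion hKH k) = Coprod.inl k := by
    rw [MulEquiv.symm_apply_eq]
    ext
    simp [MonoidHom.ofInjective_apply]
  simp [this]

end Depends

section FreeProduct

open scoped Pointwise

variable {ι : Type*} {G : ι → Type*} [∀ i, Group (G i)]

theorem phi_neWord_prod_injective {i j k : ι} (u : NeWord G j k) (hj : j ≠ i) (hk : k ≠ i)
    (hu : ¬ IsOfFinOrder u.prod) :
    Function.Injective (phi (of : G i →* CoprodI G).range u.prod) := by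
  let X : Set (CoprodI G) := {x | ∃ (l m : ι) (w : NeWord G l m), l ≠ i ∧ w.prod = x}
  have hone : (1 : CoprodI G) ∉ X := by
    rintro ⟨l, m, w, -, hw⟩
    exact neWord_prod_ne_one w hw
  refine phi_injective_of_ping_pong (X := X) ⟨u.prod, j, k, u, hj, rfl⟩ ⟨1, hone⟩ ?_ ?_
  · rintro _ ⟨a, rfl⟩ ha _ ⟨_, ⟨l, m, w, hl, rfl⟩, rfl⟩ ⟨l', m', w', hl', hw'⟩
    have ha' : a ≠ 1 := by rintro rfl; exact ha (map_one _)
    have h : ((NeWord.singleton a ha').append hl.symm w).prod = w'.prod := by simp [hw']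
    exact hl' (neWord_indices_eq_of_prod_eq h).1.symm
  · rintro n hn _ ⟨x, hx, rfl⟩
    have hun : u.prod ^ n ≠ 1 := fun h => hu (isOfFinOrder_iff_zpow_eq_one.2 ⟨n, hn, h⟩)
    obtain ⟨l, m, p, hl, hm, hp⟩ :=
      exists_neWord_of_commute u hj hk hun (Commute.refl u.prod |>.zpow_left n)
    by_cases hx1 : x = 1
    · exact ⟨l, m, p, hl, by simp [hp, hx1]⟩
    · obtain ⟨i', m', v, rfl⟩ := exists_neWord_prod_eq hx1
      obtain rfl : i' = i := by_contra fun h => hx ⟨i', m', v, h, rfl⟩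
      exact ⟨l, m', p.append hm v, hl, by simp [hp]⟩

theorem Depends.mem_range_of (htf : ∀ x : CoprodI G, IsOfFinOrder x → x = 1) {i : ι}
    {g : CoprodI G} (hg : Depends (of : G i →* CoprodI G).range g) :
    g ∈ (of : G i →* CoprodI G).range := by
  by_contra hmem
  obtain ⟨a, b, j, k, u, hj, hk, rfl⟩ := exists_eq_of_mul_neWord_mul_of hmem
  refine Depends.of_mul_mul ⟨of a, Set.mem_range_self a⟩ ⟨of b, Set.mem_range_self b⟩ hg ?_
  exact phi_neWord_prod_injective u hj hk fun hu => neWord_prod_ne_one u (htf _ hu)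

end FreeProduct

theorem Depends.mem_left_of_mem_range [Group F] (htf : ∀ x : F, IsOfFinOrder x → x = 1)
    {K K' : Subgroup F} (hinj : Function.Injective (Coprod.lift K.subtype K'.subtype)) {g : F}
    (hg : Depends K g) (hmem : g ∈ (Coprod.lift K.subtype K'.subtype).range) : g ∈ K := by
  let M (b : Bool) : Subgroup F := cond b K' K
  let e := coprodEquivCoprodI fun b => M b
  let ψ : CoprodI (fun b => M b) →* F := CoprodI.lift fun b => (M b).subtype
  have hψ : ψ ∘ e = Coprod.lift K.subtype K'.subtype :=
    congrArg DFunLike.coe (lift_comp_coprodEquivCoprodI fun b => (M b).subtype)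
  have hψinj : Function.Injective ψ := by
    rwa [← Function.Injective.of_comp_iff' _ e.bijective, hψ]
  have hK : (of (M := fun b => M b) (i := false)).range.map ψ = K := by
    rw [← MonoidHom.range_comp, lift_comp_of]
    exact K.range_subtype
  have htf' : ∀ x : CoprodI (fun b => M b), IsOfFinOrder x → x = 1 := fun x hx =>
    hψinj <| (htf _ (ψ.isOfFinOrder hx)).trans (map_one ψ).symm
  obtain ⟨x, rfl⟩ := hmem
  rw [← hψ, Function.comp_apply, ← hK] at hg ⊢
  exact Subgroup.mem_map_of_mem ψ (((depends_map_iff hψinj).1 hg).mem_range_of htf')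

theorem eq_one_of_isOfFinOrder_of_isFreeGroup [Group F] [IsFreeGroup F] {g : F}
    (hg : IsOfFinOrder g) : g = 1 := by
  have : IsMulTorsionFree F :=
    (IsFreeGroup.toFreeGroup F).injective.isMulTorsionFree (IsFreeGroup.toFreeGroup F).toMonoidHom
  exact not_imp_not.1 not_isOfFinOrder_of_isMulTorsionFree hg

theorem depClosed_freeFactor_general [Group F] (hF : ∀ g : F, IsOfFinOrder g → g = 1)
    (H K : Subgroup F) (hH : DepSubgroup H = H) (hK : IsFreeFactorOf K H) :
    DepSubgroup K = K := by
  refine le_antisymm ((Subgroup.closure_le K).2 fun g hg => ?_)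
    fun g hg => Subgroup.subset_closure (depends_of_mem hg)
  obtain ⟨r, hr⟩ := hK.exists_retraction
  have hgH : g ∈ H := hH ▸ Subgroup.subset_closure (Depends.of_retraction hK.1 hr hg)
  obtain ⟨-, K', -, hinj, rfl⟩ := hK
  exact Depends.mem_left_of_mem_range hF hinj hg hgH

/-- a free factor of a dependence-closed subgroup is dependence-closed. -/
theorem depClosed_freeFactor [Group F] [IsFreeGroup F] (H K : Subgroup F)
    (hH : DepSubgroup H = H) (hK : IsFreeFactorOf K H) :
    DepSubgroup K = K :=
  depClosed_freeFactor_general (fun _ => eq_one_of_isOfFinOrder_of_isFreeGroup) H K hH hK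
end
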